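/- Let ũ be a minimizer of J over U = (𝓗₀¹(Ω) ∩ L^{2q}(Ω)) ∖ {0}, let λ = J(ũ), and suppose there exists Ṽ ∈ S_p such that a₁(ũ, v) + ∫_Ω Ṽ ũ v dxdy = λ ∫_Ω ũ v dxdy for all v ∈ H₀(Ω) (where H₀(Ω) is formed with the potential Ṽ). Then λ₁(Ṽ) = λ = J(ũ), where λ₁(Ṽ) = inf{ a₁(u,u) + ∫_Ω Ṽ u² dxdy : u ∈ H₀(Ω), ‖u‖_{L²(Ω)} = 1 }. -/

import Mathlib

open MeasureTheory Set Filter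

noncomputable section

/-- The open unit square `Ω = (0,1) × (0,1)` in `ℝ²`. -/
def Omega : Set (ℝ × ℝ) := Ioo (0:ℝ) 1 ×ˢ Ioo (0:ℝ) 1

/-- Test functions on a set `s`: smooth with compact support contained in `s`. -/
def IsTestOn (s : Set (ℝ × ℝ)) (φ : ℝ × ℝ → ℝ) : Prop :=
  ContDiff ℝ (⊤ : ℕ∞) φ ∧ HasCompactSupport φ ∧ tsupport φ ⊆ s

/-- Classical partial derivative in the `x`-direction. -/
def pdx (φ : ℝ × ℝ → ℝ) (p : ℝ × ℝ) : ℝ := fderiv ℝ φ p (1, 0)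

/-- Classical partial derivative in the `y`-direction. -/
def pdy (φ : ℝ × ℝ → ℝ) (p : ℝ × ℝ) : ℝ := fderiv ℝ φ p (0, 1)

/-- `g` is a weak `x`-partial derivative of `u` on `s`. -/
def HasWeakDerivXOn (s : Set (ℝ × ℝ)) (u g : ℝ × ℝ → ℝ) : Prop :=
  LocallyIntegrableOn u s volume ∧ LocallyIntegrableOn g s volume ∧
  ∀ φ : ℝ × ℝ → ℝ, IsTestOn s φ →
    ∫ p in s, u p * pdx φ p = - ∫ p in s, g p * φ p

/-- `g` is a weak `y`-partial derivative of `u` on `s`. -/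
def HasWeakDerivYOn (s : Set (ℝ × ℝ)) (u g : ℝ × ℝ → ℝ) : Prop :=
  LocallyIntegrableOn u s volume ∧ LocallyIntegrableOn g s volume ∧
  ∀ φ : ℝ × ℝ → ℝ, IsTestOn s φ →
    ∫ p in s, u p * pdy φ p = - ∫ p in s, g p * φ p

/-- Test functions on `Ω`. -/
def IsTest (φ : ℝ × ℝ → ℝ) : Prop := IsTestOn Omega φ

/-- Membership in the weighted Sobolev space `𝓗¹(Ω)`, with weak derivatives `gx, gy`:
`u ∈ L²(Ω)`, `gx = ∂ₓu`, `gy = ∂_y u` weakly, and `y^α₁ gx, x^α₂ gy ∈ L²(Ω)`. -/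
structure MemH1 (α₁ α₂ : ℝ) (u gx gy : ℝ × ℝ → ℝ) : Prop where
  memL2 : MemLp u 2 (volume.restrict Omega)
  weakX : HasWeakDerivXOn Omega u gx
  weakY : HasWeakDerivYOn Omega u gy
  wgx : MemLp (fun p => p.2 ^ α₁ * gx p) 2 (volume.restrict Omega)
  wgy : MemLp (fun p => p.1 ^ α₂ * gy p) 2 (volume.restrict Omega)

/-- The `𝓗¹(Ω)` norm of `u` (with weak derivatives `gx, gy`). -/
def H1Norm (α₁ α₂ : ℝ) (u gx gy : ℝ × ℝ → ℝ) : ℝ :=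
  Real.sqrt ((∫ p in Omega, (u p) ^ 2) +
    (∫ p in Omega, (p.2 ^ α₁ * gx p) ^ 2) +
    (∫ p in Omega, (p.1 ^ α₂ * gy p) ^ 2))

/-- Membership in `𝓗₀¹(Ω)`: member of `𝓗¹(Ω)` approximable in the `𝓗¹` norm by
test functions. -/
def MemH10 (α₁ α₂ : ℝ) (u gx gy : ℝ × ℝ → ℝ) : Prop :=
  MemH1 α₁ α₂ u gx gy ∧
  ∀ ε : ℝ, 0 < ε → ∃ φ : ℝ × ℝ → ℝ, IsTest φ ∧
    H1Norm α₁ α₂ (fun p => u p - φ p) (fun p => gx p - pdx φ p)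
      (fun p => gy p - pdy φ p) < ε

/-- Membership in `H₀(Ω) = {u ∈ 𝓗₀¹(Ω) : ∫_Ω V u² < ∞}`. -/
def MemH0 (α₁ α₂ : ℝ) (V u gx gy : ℝ × ℝ → ℝ) : Prop :=
  MemH10 α₁ α₂ u gx gy ∧
  IntegrableOn (fun p => V p * (u p) ^ 2) Omega volume

/-- The bilinear form `a(u,v)` associated with the sub-elliptic operator with potential `V`. -/
def aForm (α₁ α₂ : ℝ) (V u gx gy v hx hy : ℝ × ℝ → ℝ) : ℝ :=
  ∫ p in Omega, ((p.2 ^ α₁ * gx p) * (p.2 ^ α₁ * hx p) +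
    (p.1 ^ α₂ * gy p) * (p.1 ^ α₂ * hy p) + V p * u p * v p)

/-- The bilinear form `a₁(u,v)` (no potential). -/
def a1Form (α₁ α₂ : ℝ) (u gx gy v hx hy : ℝ × ℝ → ℝ) : ℝ :=
  ∫ p in Omega, ((p.2 ^ α₁ * gx p) * (p.2 ^ α₁ * hx p) +
    (p.1 ^ α₂ * gy p) * (p.1 ^ α₂ * hy p))

/-- Membership in `S_p = {V ∈ L^p(Ω) : V ≥ 0 a.e., ‖V‖_{L^p(Ω)} ≤ M}`. -/
def MemSp (ppow M : ℝ) (V : ℝ × ℝ → ℝ) : Prop :=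
  MemLp V (ENNReal.ofReal ppow) (volume.restrict Omega) ∧
  (∀ᵐ p ∂(volume.restrict Omega), 0 ≤ V p) ∧
  eLpNorm V (ENNReal.ofReal ppow) (volume.restrict Omega) ≤ ENNReal.ofReal M

/-- `u` (with weak derivatives `gx, gy`) is an eigenfunction of the sub-elliptic operator
with potential `V` for the eigenvalue `lam`. -/
def IsEigenfun (α₁ α₂ : ℝ) (V : ℝ × ℝ → ℝ) (lam : ℝ) (u gx gy : ℝ × ℝ → ℝ) : Prop :=
  MemH0 α₁ α₂ V u gx gy ∧
  ∀ v hx hy : ℝ × ℝ → ℝ, MemH0 α₁ α₂ V v hx hy →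
    aForm α₁ α₂ V u gx gy v hx hy = lam * ∫ p in Omega, u p * v p

/-- The first eigenvalue `λ₁(V) = inf { a(u,u) : u ∈ H₀(Ω), ‖u‖_{L²} = 1 }`. -/
def lam1 (α₁ α₂ : ℝ) (V : ℝ × ℝ → ℝ) : ℝ :=
  sInf { r | ∃ u gx gy : ℝ × ℝ → ℝ, MemH0 α₁ α₂ V u gx gy ∧
    (∫ p in Omega, (u p) ^ 2) = 1 ∧ r = aForm α₁ α₂ V u gx gy u gx gy }

/-- `sup { a(u,u) : u ∈ span(φ), ‖u‖_{L²(Ω)} = 1 }` for a finite family `φ` with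
weak derivatives `φx, φy`. -/
def rayleighSup (α₁ α₂ : ℝ) (V : ℝ × ℝ → ℝ) {k : ℕ} (φ φx φy : Fin k → ℝ × ℝ → ℝ) : ℝ :=
  sSup { s | ∃ c : Fin k → ℝ,
    (∫ p in Omega, (∑ i, c i * φ i p) ^ 2) = 1 ∧
    s = aForm α₁ α₂ V (fun p => ∑ i, c i * φ i p) (fun p => ∑ i, c i * φx i p)
      (fun p => ∑ i, c i * φy i p) (fun p => ∑ i, c i * φ i p)
      (fun p => ∑ i, c i * φx i p) (fun p => ∑ i, c i * φy i p) }

/-- The set of values `sup { a(u,u) : u ∈ E, ‖u‖ = 1 }` over `k`-dimensional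
subspaces `E` of `H₀(Ω)` (represented by `L²(Ω)`-linearly independent families of
`k` elements of `H₀(Ω)`). -/
def minmaxSet (α₁ α₂ : ℝ) (V : ℝ × ℝ → ℝ) (k : ℕ) : Set ℝ :=
  { r | ∃ φ φx φy : Fin k → ℝ × ℝ → ℝ,
      (∀ i, MemH0 α₁ α₂ V (φ i) (φx i) (φy i)) ∧
      (∀ c : Fin k → ℝ, (∀ᵐ p ∂(volume.restrict Omega), ∑ i, c i * φ i p = 0) → c = 0) ∧
      r = rayleighSup α₁ α₂ V φ φx φy }

/-- The `k`-th eigenvalue via the min-max principle. -/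
def lamk (α₁ α₂ : ℝ) (V : ℝ × ℝ → ℝ) (k : ℕ) : ℝ := sInf (minmaxSet α₁ α₂ V k)

/-- Membership in `U = (𝓗₀¹(Ω) ∩ L^{2q}(Ω)) \ {0}`. -/
def MemU (α₁ α₂ qe : ℝ) (u gx gy : ℝ × ℝ → ℝ) : Prop :=
  MemH10 α₁ α₂ u gx gy ∧
  MemLp u (ENNReal.ofReal (2 * qe)) (volume.restrict Omega) ∧
  ¬ (∀ᵐ p ∂(volume.restrict Omega), u p = 0)

/-- The functional `J(u) = (a₁(u,u) + M ‖u‖_{L^{2q}(Ω)}²) / ‖u‖_{L²(Ω)}²`. -/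
def Jfun (α₁ α₂ M qe : ℝ) (u gx gy : ℝ × ℝ → ℝ) : ℝ :=
  (a1Form α₁ α₂ u gx gy u gx gy +
    M * (∫ p in Omega, |u p| ^ (2 * qe)) ^ (1 / qe)) / (∫ p in Omega, (u p) ^ 2)

/-!
The functional `J` is convex in the density `ρ = u²`: the energy `a₁` satisfies
`a₁(w, w) ≤ a₁(u, u) + a₁(v, v)` for `w = √(u² + v²)`, which is read off from smooth approximations
of the Euclidean norm of `ℝ²`. Minimality of `ũ` applied to `√(ũ² + t v²)` therefore bounds
`N t = M ‖ũ² + t v²‖_q` from below, for `t ≥ 0`, by `N 0 + t (λ ∫ v² - a₁(v, v))`. By Hölder's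
inequality `N t ≥ ∫ Ṽ (ũ² + t v²)` for all real `t`, and the equation tested with `ũ` says that
equality holds at `t = 0`; hence `N' 0 = ∫ Ṽ v²`. Comparing slopes gives
`λ ∫ v² ≤ a₁(v, v) + ∫ Ṽ v²` for `v ∈ L^{2q}`, and truncation extends this to all of `H₀(Ω)`.
-/

open scoped Topology ENNReal

theorem abs_rpow_sub_two_mul_self {q : ℝ} (hq : 1 < q) (y : ℝ) :
    |y| ^ (q - 2) * |y| = |y| ^ (q - 1) := by
  rcases eq_or_ne y 0 with rfl | hy
  · simp [Real.zero_rpow (sub_ne_zero.2 hq.ne')]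
  · rw [← Real.rpow_add_one (abs_ne_zero.2 hy)]
    ring_nf

theorem norm_mul_abs_add_mul_rpow_le {q s : ℝ} (hq : 1 < q) (hs : |s| ≤ 1) (a b : ℝ) :
    ‖q * |a + s * b| ^ (q - 2) * (a + s * b) * b‖ ≤ q * (|a| + |b|) ^ q := by
  have hq₀ : 0 < q := zero_lt_one.trans hq
  have hle : |a + s * b| ≤ |a| + |b| := (abs_add_le _ _).trans <| by
    rw [abs_mul]
    gcongr
    exact mul_le_of_le_one_left (abs_nonneg _) hs
  calc ‖q * |a + s * b| ^ (q - 2) * (a + s * b) * b‖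
      = q * (|a + s * b| ^ (q - 1) * |b|) := by
        rw [← abs_rpow_sub_two_mul_self hq]
        simp only [norm_mul, Real.norm_eq_abs, abs_of_pos hq₀,
          abs_of_nonneg (Real.rpow_nonneg (abs_nonneg _) _)]
        ring
    _ ≤ q * ((|a| + |b|) ^ (q - 1) * (|a| + |b|)) := by
        have := (sub_pos.2 hq).le
        gcongr
        exact le_add_of_nonneg_left (abs_nonneg _)
    _ = q * (|a| + |b|) ^ q := by
        rw [← Real.rpow_add_one' (by positivity) (by linarith), sub_add_cancel]

theorem le_deriv_of_eventually_le {N : ℝ → ℝ} {a D c : ℝ} (hN : HasDerivAt N D a)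
    (hle : ∀ᶠ t in 𝓝[>] a, N a + (t - a) * c ≤ N t) : c ≤ D := by
  refine ge_of_tendsto ((hasDerivWithinAt_iff_tendsto_slope' (by simp)).1
    (hN.hasDerivWithinAt (s := Ioi a))) ?_
  filter_upwards [hle, self_mem_nhdsWithin] with t ht hat
  rw [slope_def_field, le_div_iff₀ (sub_pos.2 hat)]
  linarith

theorem tendsto_sqrt_add_add_zero_iff {ι : Type*} {l : Filter ι} {a b c : ι → ℝ}
    (ha : ∀ i, 0 ≤ a i) (hb : ∀ i, 0 ≤ b i) (hc : ∀ i, 0 ≤ c i) :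
    Tendsto (fun i => √(a i + b i + c i)) l (𝓝 0) ↔
      Tendsto a l (𝓝 0) ∧ Tendsto b l (𝓝 0) ∧ Tendsto c l (𝓝 0) := by
  refine ⟨fun h => ?_, fun ⟨h₁, h₂, h₃⟩ => by simpa using ((h₁.add h₂).add h₃).sqrt⟩
  have hsum : Tendsto (fun i => a i + b i + c i) l (𝓝 0) := by
    simpa [Real.sq_sqrt (add_nonneg (add_nonneg (ha _) (hb _)) (hc _))] using h.pow 2
  exact ⟨squeeze_zero ha (fun i => by linarith [hb i, hc i]) hsum,
    squeeze_zero hb (fun i => by linarith [ha i, hc i]) hsum,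
    squeeze_zero hc (fun i => by linarith [ha i, hb i]) hsum⟩

section Lp

variable {X E G : Type*} [MeasurableSpace X] {μ : Measure X} [NormedAddCommGroup E]
  [NormedAddCommGroup G]

theorem tendsto_eLpNorm_zero_of_dominated {p : ℝ≥0∞} (hp₀ : p ≠ 0) (hp : p ≠ ∞)
    {f : ℕ → X → E} {b : X → ℝ} (hf : ∀ n, AEStronglyMeasurable (f n) μ) (hb : MemLp b p μ)
    (hfb : ∀ n, ∀ᵐ x ∂μ, ‖f n x‖ ≤ b x) (hlim : ∀ᵐ x ∂μ, Tendsto (f · x) atTop (𝓝 0)) :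
    Tendsto (fun n => eLpNorm (f n) p μ) atTop (𝓝 0) := by
  have hr : 0 < p.toReal := ENNReal.toReal_pos hp₀ hp
  have hpow : Tendsto (fun n => ∫⁻ x, ‖f n x‖ₑ ^ p.toReal ∂μ) atTop (𝓝 (∫⁻ _, 0 ∂μ)) := by
    refine tendsto_lintegral_of_dominated_convergence' (fun x => ‖b x‖ₑ ^ p.toReal)
      (fun n => (hf n).enorm.pow_const _) (fun n => ?_)
      (lintegral_rpow_enorm_lt_top_of_eLpNorm_lt_top hp₀ hp hb.2).ne ?_
    · filter_upwards [hfb n] with x hx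
      gcongr
      exact enorm_le_iff_norm_le.2 (hx.trans (le_abs_self _))
    · filter_upwards [hlim] with x hx
      simpa [hr, Function.comp_def] using
        ((ENNReal.continuous_rpow_const (y := p.toReal)).tendsto 0).comp (by simpa using hx.enorm)
  simp_rw [eLpNorm_eq_lintegral_rpow_enorm_toReal hp₀ hp]
  simpa [hr, Function.comp_def] using
    ((ENNReal.continuous_rpow_const (y := 1 / p.toReal)).tendsto 0).comp (by simpa using hpow)

theorem tendsto_eLpNorm_prodMk_sub {p : ℝ≥0∞} (hp : 1 ≤ p)
    {f : X → E} {g : X → G} {fn : ℕ → X → E} {gn : ℕ → X → G}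
    (hf : AEStronglyMeasurable f μ) (hg : AEStronglyMeasurable g μ)
    (hfn : ∀ n, AEStronglyMeasurable (fn n) μ) (hgn : ∀ n, AEStronglyMeasurable (gn n) μ)
    (hlimf : Tendsto (fun n => eLpNorm (fn n - f) p μ) atTop (𝓝 0))
    (hlimg : Tendsto (fun n => eLpNorm (gn n - g) p μ) atTop (𝓝 0)) :
    Tendsto (fun n => eLpNorm ((fun x => (fn n x, gn n x)) - fun x => (f x, g x)) p μ)
      atTop (𝓝 0) := by
  refine tendsto_of_tendsto_of_tendsto_of_le_of_le tendsto_const_nhds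
    (by simpa only [add_zero] using hlimf.add hlimg) (fun n => zero_le) fun n => ?_
  rw [← eLpNorm_norm (fn n - f), ← eLpNorm_norm (gn n - g)]
  refine (eLpNorm_mono_real fun x => ?_).trans
    (eLpNorm_add_le ((hfn n).sub hf).norm ((hgn n).sub hg).norm hp)
  exact max_le_add_of_nonneg (norm_nonneg _) (norm_nonneg _)

theorem tendsto_eLpNorm_clm_apply_sub [NormedSpace ℝ E] [NormedSpace ℝ G] {p : ℝ≥0∞}
    (hp₁ : 1 ≤ p) (hp : p ≠ ∞) {C : ℝ}
    {A : X → E} {An : ℕ → X → E} {L : X → E →L[ℝ] G} {Ln : ℕ → X → E →L[ℝ] G}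
    (hA : MemLp A p μ) (hAn : ∀ n, AEStronglyMeasurable (An n) μ)
    (hLn : ∀ n, AEStronglyMeasurable (Ln n) μ) (hLnC : ∀ n x, ‖Ln n x‖ ≤ C)
    (hlimL : ∀ᵐ x ∂μ, Tendsto (Ln · x) atTop (𝓝 (L x)))
    (hlimA : Tendsto (fun n => eLpNorm (An n - A) p μ) atTop (𝓝 0)) :
    Tendsto (fun n => eLpNorm (fun x => Ln n x (An n x) - L x (A x)) p μ) atTop (𝓝 0) := by
  have hmeas {K : X → E →L[ℝ] G} {B : X → E} (hK : AEStronglyMeasurable K μ)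
      (hB : AEStronglyMeasurable B μ) : AEStronglyMeasurable (fun x => K x (B x)) μ :=
    isBoundedBilinearMap_apply.continuous.comp_aestronglyMeasurable (hK.prodMk hB)
  have hL : AEStronglyMeasurable L μ := aestronglyMeasurable_of_tendsto_ae atTop hLn hlimL
  have hbound : Tendsto (fun n => ENNReal.ofReal C * eLpNorm (An n - A) p μ) atTop (𝓝 0) := by
    simpa using ENNReal.Tendsto.const_mul hlimA (.inr ENNReal.ofReal_ne_top)
  have hcoeff : Tendsto (fun n => eLpNorm (fun x => (Ln n x - L x) (A x)) p μ) atTop (𝓝 0) := by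
    refine tendsto_eLpNorm_zero_of_dominated (zero_lt_one.trans_le hp₁).ne' hp
      (fun n => hmeas ((hLn n).sub hL) hA.1) (hA.norm.const_mul (C + C)) (fun n => ?_) ?_
    · filter_upwards [hlimL] with x hx
      have hLC : ‖L x‖ ≤ C := le_of_tendsto' hx.norm (hLnC · x)
      exact (Ln n x - L x).le_of_opNorm_le
        ((norm_sub_le _ _).trans (add_le_add (hLnC n x) hLC)) _
    · filter_upwards [hlimL] with x hx
      have hsub : Tendsto (fun n => Ln n x - L x) atTop (𝓝 0) := by
        simpa using hx.sub_const (L x)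
      simpa [Function.comp_def] using
        ((ContinuousLinearMap.apply ℝ G (A x)).continuous.tendsto 0).comp hsub
  refine tendsto_of_tendsto_of_tendsto_of_le_of_le tendsto_const_nhds
    (by simpa only [add_zero] using hbound.add hcoeff) (fun n => zero_le) fun n => ?_
  calc eLpNorm (fun x => Ln n x (An n x) - L x (A x)) p μ
      = eLpNorm ((fun x => Ln n x ((An n - A) x)) + fun x => (Ln n x - L x) (A x)) p μ := by
        congr 1 with x; simp
    _ ≤ eLpNorm (fun x => Ln n x ((An n - A) x)) p μ
          + eLpNorm (fun x => (Ln n x - L x) (A x)) p μ :=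
        eLpNorm_add_le (hmeas (hLn n) ((hAn n).sub hA.1)) (hmeas ((hLn n).sub hL) hA.1) hp₁
    _ ≤ ENNReal.ofReal C * eLpNorm (An n - A) p μ
          + eLpNorm (fun x => (Ln n x - L x) (A x)) p μ := by
        gcongr
        exact eLpNorm_le_mul_eLpNorm_of_ae_le_mul
          (Eventually.of_forall fun x => (Ln n x).le_of_opNorm_le (hLnC n x) _) p

theorem tendsto_integral_mul_of_tendsto_eLpNorm {p q : ℝ≥0∞} [p.HolderConjugate q]
    {f k : X → ℝ} {fn : ℕ → X → ℝ} (hf : MemLp f p μ) (hfn : ∀ n, MemLp (fn n) p μ)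
    (hk : MemLp k q μ) (hlim : Tendsto (fun n => eLpNorm (fn n - f) p μ) atTop (𝓝 0)) :
    Tendsto (fun n => ∫ x, fn n x * k x ∂μ) atTop (𝓝 (∫ x, f x * k x ∂μ)) := by
  refine tendsto_integral_of_L1' _ (hf.integrable_mul hk).1
    (Eventually.of_forall fun n => (hfn n).integrable_mul hk) ?_
  refine tendsto_of_tendsto_of_tendsto_of_le_of_le tendsto_const_nhds
    (h := fun n => eLpNorm (fn n - f) p μ * eLpNorm k q μ)
    (by simpa using ENNReal.Tendsto.mul_const hlim (.inr hk.2.ne)) (fun n => zero_le) fun n => ?_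
  have hprod : (fun x => fn n x * k x) - f * k = (fn n - f) • k := by
    ext x; simp [sub_mul]
  simpa only [hprod] using
    eLpNorm_smul_le_mul_eLpNorm (p := p) (q := q) (r := 1) hk.1 ((hfn n).sub hf).1

theorem eLpNorm_two_eq_ofReal_sqrt {f : X → ℝ} (hf : MemLp f 2 μ) :
    eLpNorm f 2 μ = ENNReal.ofReal √(∫ x, f x ^ 2 ∂μ) := by
  rw [hf.eLpNorm_eq_integral_rpow_norm two_ne_zero ENNReal.ofNat_ne_top, Real.sqrt_eq_rpow]
  simp

theorem tendsto_eLpNorm_two_zero_iff {f : ℕ → X → ℝ} (hf : ∀ n, MemLp (f n) 2 μ) :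
    Tendsto (fun n => eLpNorm (f n) 2 μ) atTop (𝓝 0) ↔
      Tendsto (fun n => ∫ x, f n x ^ 2 ∂μ) atTop (𝓝 0) := by
  have hnorm (n : ℕ) : (eLpNorm (f n) 2 μ).toReal = √(∫ x, f n x ^ 2 ∂μ) := by
    rw [eLpNorm_two_eq_ofReal_sqrt (hf n), ENNReal.toReal_ofReal (Real.sqrt_nonneg _)]
  rw [← ENNReal.tendsto_toReal_zero_iff fun n => (hf n).2.ne]
  simp_rw [hnorm]
  refine ⟨fun h => ?_, fun h => by simpa using h.sqrt⟩
  simpa [Real.sq_sqrt (integral_nonneg fun x => sq_nonneg (f _ x))] using h.pow 2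

theorem memLp_sq {r : ℝ≥0∞} {u : X → ℝ} (hu : MemLp u (2 * r) μ) :
    MemLp (fun x => u x ^ 2) r μ := by
  have : (2 * r).HolderTriple (2 * r) r := ⟨by
    rw [ENNReal.mul_inv (by simp) (by simp), ← add_mul, ENNReal.inv_two_add_inv_two, one_mul]⟩
  simpa only [sq] using hu.mul' hu

theorem memLp_sq_ofReal {q : ℝ} {u : X → ℝ} (hu : MemLp u (.ofReal (2 * q)) μ) :
    MemLp (fun x => u x ^ 2) (.ofReal q) μ :=
  memLp_sq (by rwa [ENNReal.ofReal_mul zero_le_two, ENNReal.ofReal_ofNat] at hu)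

theorem integral_sq_pos {u : X → ℝ} (hu : MemLp u 2 μ) (hu₀ : ¬ ∀ᵐ x ∂μ, u x = 0) :
    0 < ∫ x, u x ^ 2 ∂μ := by
  refine (integral_nonneg fun _ => sq_nonneg _).lt_of_ne' fun h => hu₀ ?_
  filter_upwards [(integral_eq_zero_iff_of_nonneg (fun _ => sq_nonneg _) hu.integrable_sq).1 h]
    with x hx using by simpa using hx

theorem integrable_abs_rpow {q : ℝ} (hq : 0 < q)
    {f : X → ℝ} (hf : MemLp f (.ofReal q) μ) : Integrable (fun x => |f x| ^ q) μ := by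
  simpa [ENNReal.toReal_ofReal hq.le] using
    hf.integrable_norm_rpow (by simpa using hq) ENNReal.ofReal_ne_top

theorem integral_abs_rpow_pos {q : ℝ} (hq : 0 < q)
    {f : X → ℝ} (hf : MemLp f (.ofReal q) μ) (hf₀ : ¬ ∀ᵐ x ∂μ, f x = 0) :
    0 < ∫ x, |f x| ^ q ∂μ := by
  have hnonneg : 0 ≤ fun x => |f x| ^ q := fun x => by positivity
  refine (integral_nonneg hnonneg).lt_of_ne' fun h => hf₀ ?_
  filter_upwards [(integral_eq_zero_iff_of_nonneg hnonneg (integrable_abs_rpow hq hf)).1 h]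
    with x hx
  simpa [Real.rpow_eq_zero_iff_of_nonneg, hq.ne'] using hx

theorem integral_mul_le_of_eLpNorm_le {p q M : ℝ} (hpq : p.HolderConjugate q) (hM : 0 ≤ M)
    {V k : X → ℝ} (hV : MemLp V (.ofReal p) μ) (hVM : eLpNorm V (.ofReal p) μ ≤ .ofReal M)
    (hk : MemLp k (.ofReal q) μ) :
    ∫ x, V x * k x ∂μ ≤ M * (∫ x, |k x| ^ q ∂μ) ^ (1 / q) := by
  have hVM' : (∫ x, ‖V x‖ ^ p ∂μ) ^ (1 / p) ≤ M := by
    rwa [hV.eLpNorm_eq_integral_rpow_norm (by simpa using hpq.pos) ENNReal.ofReal_ne_top,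
      ENNReal.toReal_ofReal hpq.nonneg, ENNReal.ofReal_le_ofReal_iff hM, ← one_div] at hVM
  calc ∫ x, V x * k x ∂μ ≤ ∫ x, ‖V x‖ * ‖k x‖ ∂μ := by
        simp_rw [← norm_mul]
        exact (Real.le_norm_self _).trans (norm_integral_le_integral_norm _)
    _ ≤ (∫ x, ‖V x‖ ^ p ∂μ) ^ (1 / p) * (∫ x, ‖k x‖ ^ q ∂μ) ^ (1 / q) :=
        integral_mul_norm_le_Lp_mul_Lq hpq hV hk
    _ ≤ M * (∫ x, |k x| ^ q ∂μ) ^ (1 / q) := by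
        simp only [Real.norm_eq_abs] at hVM' ⊢
        gcongr

theorem hasDerivAt_integral_abs_add_mul_rpow {f h : X → ℝ} {q : ℝ} (hq : 1 < q)
    (hf : MemLp f (.ofReal q) μ) (hh : MemLp h (.ofReal q) μ) :
    HasDerivAt (fun s : ℝ => ∫ x, |f x + s * h x| ^ q ∂μ)
      (∫ x, q * |f x| ^ (q - 2) * f x * h x ∂μ) 0 := by
  have hq₀ : 0 < q := zero_lt_one.trans hq
  have hmeas (s : ℝ) : AEStronglyMeasurable (fun x => f x + s * h x) μ :=
    hf.1.add (hh.1.const_mul s)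
  have hbound : Integrable (fun x => (|f x| + |h x|) ^ q) μ := by
    refine (integrable_abs_rpow hq₀ (hf.norm.add hh.norm)).congr (.of_forall fun x => ?_)
    simp [abs_of_nonneg (add_nonneg (abs_nonneg (f x)) (abs_nonneg (h x)))]
  have hpow (s : ℝ) : AEStronglyMeasurable (fun x => |f x + s * h x| ^ q) μ :=
    (Real.continuous_rpow_const hq₀.le).comp_aestronglyMeasurable (hmeas s).norm
  have hint : Integrable (fun x => |f x + 0 * h x| ^ q) μ := by
    refine hbound.mono' (hpow 0) (.of_forall fun x => ?_)
    rw [Real.norm_of_nonneg (by positivity)]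
    gcongr
    simp
  have hderiv := (hasDerivAt_integral_of_dominated_loc_of_deriv_le (x₀ := (0 : ℝ))
    (F := fun s x => |f x + s * h x| ^ q)
    (F' := fun s x => q * |f x + s * h x| ^ (q - 2) * (f x + s * h x) * h x)
    (bound := fun x => q * (|f x| + |h x|) ^ q) (Metric.ball_mem_nhds _ one_pos)
    (.of_forall hpow) hint ?_ (.of_forall fun x s hs => ?_) (hbound.const_mul q)
    (.of_forall fun x s _ => ?_)).2
  · simpa using hderiv
  · exact ((((hmeas 0).norm.aemeasurable.pow_const _).aestronglyMeasurable.const_mul q).mul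
      (hmeas 0)).mul hh.1
  · exact norm_mul_abs_add_mul_rpow_le hq (by simpa using (mem_ball_zero_iff.1 hs).le) _ _
  · simpa [Function.comp_def] using (hasDerivAt_abs_rpow (f x + s * h x) hq).comp s
      (((hasDerivAt_id s).mul_const (h x)).const_add (f x))

theorem hasDerivAt_of_holder_eq {p q M : ℝ} {V f h : X → ℝ}
    (hpq : p.HolderConjugate q) (hM : 0 ≤ M) (hV : MemLp V (.ofReal p) μ)
    (hVM : eLpNorm V (.ofReal p) μ ≤ .ofReal M) (hf : MemLp f (.ofReal q) μ)
    (hf₀ : ¬ ∀ᵐ x ∂μ, f x = 0) (hh : MemLp h (.ofReal q) μ)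
    (heq : M * (∫ x, |f x| ^ q ∂μ) ^ (1 / q) = ∫ x, V x * f x ∂μ) :
    HasDerivAt (fun t => M * (∫ x, |f x + t * h x| ^ q ∂μ) ^ (1 / q)) (∫ x, V x * h x ∂μ) 0 := by
  set N : ℝ → ℝ := fun t => M * (∫ x, |f x + t * h x| ^ q ∂μ) ^ (1 / q) with hNdef
  have := hpq.ennrealOfReal
  have hVf : Integrable (fun x => V x * f x) μ := hV.integrable_mul hf
  have hVh : Integrable (fun x => V x * h x) μ := hV.integrable_mul hh
  obtain ⟨D, hN⟩ : ∃ D, HasDerivAt N D 0 := by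
    have hpos := integral_abs_rpow_pos hpq.symm.pos hf hf₀
    exact ⟨_, ((hasDerivAt_integral_abs_add_mul_rpow hpq.symm.lt hf hh).rpow_const
      (.inl (by simpa using hpos.ne'))).const_mul M⟩
  have hmin : IsLocalMin (fun t => N t - t * ∫ x, V x * h x ∂μ) 0 := by
    refine .of_forall fun t => ?_
    have hle : ∫ x, V x * (f x + t * h x) ∂μ ≤ N t :=
      integral_mul_le_of_eLpNorm_le hpq hM hV hVM (hf.add (hh.const_mul t))
    simp only [mul_add, mul_left_comm (V _) t] at hle
    rw [integral_add hVf (hVh.const_mul t), integral_const_mul] at hle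
    simp only [hNdef, zero_mul, add_zero, heq]
    linarith
  have hD := hmin.hasDerivAt_eq_zero (hN.sub ((hasDerivAt_id 0).mul_const _))
  rwa [sub_eq_zero.1 hD, one_mul] at hN

end Lp

section LocalIntegrability

variable {X : Type*} [TopologicalSpace X] [MeasurableSpace X] [OpensMeasurableSpace X]
  {μ : Measure X} {s : Set X} {ω : X → ℝ}

theorem memLp_mul_of_tsupport_subset [IsFiniteMeasureOnCompacts μ] {χ : X → ℝ} {p : ℝ≥0∞}
    (hs : IsOpen s) (hω : ContinuousOn ω s) (hχ : Continuous χ) (hχc : HasCompactSupport χ)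
    (hχs : tsupport χ ⊆ s) :
    MemLp (fun x => ω x * χ x) p (μ.restrict s) :=
  (((hω.mul hχ.continuousOn).continuous_of_tsupport_subset hs
    (tsupport_mul_subset_right.trans hχs)).memLp_of_hasCompactSupport hχc.mul_left)

theorem locallyIntegrableOn_of_memLp_mul [T2Space X] [LocallyCompactSpace X]
    [IsLocallyFiniteMeasure μ] {g : X → ℝ} {p : ℝ≥0∞} (hp : 1 ≤ p) (hs : IsOpen s)
    (hω : ContinuousOn ω s) (hω₀ : ∀ x ∈ s, ω x ≠ 0)
    (hg : MemLp (fun x => ω x * g x) p (μ.restrict s)) : LocallyIntegrableOn g s μ := by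
  refine ((locallyIntegrableOn_of_locallyIntegrable_restrict (hg.locallyIntegrable hp)
    ).continuousOn_mul (hω.inv₀ hω₀) hs.isLocallyClosed).congr ?_
  filter_upwards [ae_restrict_mem hs.measurableSet] with x hx
  exact inv_mul_cancel_left₀ (hω₀ x hx) _

end LocalIntegrability

section WeakDerivative

variable {s : Set (ℝ × ℝ)} {e : ℝ × ℝ} {ω : ℝ × ℝ → ℝ}

namespace IsTestOn

variable {φ ψ : ℝ × ℝ → ℝ}

theorem differentiable (hφ : IsTestOn s φ) : Differentiable ℝ φ := hφ.1.differentiable (by simp)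

theorem continuous_fderiv_apply (hφ : IsTestOn s φ) (e : ℝ × ℝ) :
    Continuous fun x => fderiv ℝ φ x e :=
  (hφ.1.continuous_fderiv (by simp)).clm_apply continuous_const

theorem memLp_mul {p : ℝ≥0∞} (hφ : IsTestOn s φ) (hs : IsOpen s) (hω : ContinuousOn ω s) :
    MemLp (fun x => ω x * φ x) p (volume.restrict s) :=
  memLp_mul_of_tsupport_subset hs hω hφ.1.continuous hφ.2.1 hφ.2.2

theorem memLp_mul_fderiv {p : ℝ≥0∞} (hφ : IsTestOn s φ) (hs : IsOpen s) (hω : ContinuousOn ω s)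
    (e : ℝ × ℝ) : MemLp (fun x => ω x * fderiv ℝ φ x e) p (volume.restrict s) :=
  memLp_mul_of_tsupport_subset hs hω (hφ.continuous_fderiv_apply e) (hφ.2.1.fderiv_apply ℝ e)
    ((tsupport_fderiv_apply_subset ℝ e).trans hφ.2.2)

theorem memLp {p : ℝ≥0∞} (hφ : IsTestOn s φ) : MemLp φ p (volume.restrict s) :=
  hφ.1.continuous.memLp_of_hasCompactSupport hφ.2.1

theorem memLp_fderiv {p : ℝ≥0∞} (hφ : IsTestOn s φ) (e : ℝ × ℝ) :
    MemLp (fun x => fderiv ℝ φ x e) p (volume.restrict s) :=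
  (hφ.continuous_fderiv_apply e).memLp_of_hasCompactSupport (hφ.2.1.fderiv_apply ℝ e)

theorem setIntegral_mul_fderiv (hφ : IsTestOn s φ) (hψ : IsTestOn s ψ) (e : ℝ × ℝ) :
    ∫ x in s, φ x * fderiv ℝ ψ x e = -∫ x in s, fderiv ℝ φ x e * ψ x := by
  have hzero {χ : ℝ × ℝ → ℝ} (hχ : IsTestOn s χ) {x : ℝ × ℝ} (hx : x ∉ s) : χ x = 0 :=
    image_eq_zero_of_notMem_tsupport fun h => hx (hχ.2.2 h)
  rw [setIntegral_eq_integral_of_forall_compl_eq_zero fun x hx => by rw [hzero hφ hx, zero_mul],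
    setIntegral_eq_integral_of_forall_compl_eq_zero fun x hx => by rw [hzero hψ hx, mul_zero]]
  have hφc := hφ.1.continuous
  have hψc := hψ.1.continuous
  exact integral_mul_fderiv_eq_neg_fderiv_mul_of_integrable
    (((hφ.continuous_fderiv_apply e).mul hψc).integrable_of_hasCompactSupport hψ.2.1.mul_left)
    ((hφc.mul (hψ.continuous_fderiv_apply e)).integrable_of_hasCompactSupport hφ.2.1.mul_right)
    ((hφc.mul hψc).integrable_of_hasCompactSupport hφ.2.1.mul_right)
    (fun x _ => hφ.differentiable x) (fun x _ => hψ.differentiable x)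

theorem comp₂ {F : ℝ × ℝ → ℝ} (hF : ContDiff ℝ (⊤ : ℕ∞) F) (hF₀ : F 0 = 0)
    (hφ : IsTestOn s φ) (hψ : IsTestOn s ψ) : IsTestOn s fun x => F (φ x, ψ x) := by
  have hsub : tsupport (fun x => F (φ x, ψ x)) ⊆ tsupport φ ∪ tsupport ψ := by
    refine closure_minimal (fun x hx => ?_) ((isClosed_tsupport φ).union (isClosed_tsupport ψ))
    by_contra hn
    rw [mem_union, not_or] at hn
    exact hx ((congrArg F (Prod.ext (image_eq_zero_of_notMem_tsupport hn.1)
      (image_eq_zero_of_notMem_tsupport hn.2))).trans hF₀)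
  exact ⟨hF.comp (hφ.1.prodMk hψ.1), (hφ.2.1.isCompact.union hψ.2.1.isCompact).of_isClosed_subset
    (isClosed_tsupport _) hsub, hsub.trans (union_subset hφ.2.2 hψ.2.2)⟩

theorem fderiv_comp₂ {F : ℝ × ℝ → ℝ} (hF : Differentiable ℝ F)
    (hφ : IsTestOn s φ) (hψ : IsTestOn s ψ) (x e : ℝ × ℝ) :
    fderiv ℝ (fun x => F (φ x, ψ x)) x e =
      fderiv ℝ F (φ x, ψ x) (fderiv ℝ φ x e, fderiv ℝ ψ x e) := by
  have h := (hF (φ x, ψ x)).hasFDerivAt.comp x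
    ((hφ.differentiable x).hasFDerivAt.prodMk (hψ.differentiable x).hasFDerivAt)
  exact DFunLike.congr_fun h.fderiv e

end IsTestOn

/-- `g` is the weak derivative of `u` on `s` in the direction `e`; the directions `(1, 0)` and
`(0, 1)` give back `HasWeakDerivXOn` and `HasWeakDerivYOn` definitionally. -/
def HasWeakDerivAlong (e : ℝ × ℝ) (s : Set (ℝ × ℝ)) (u g : ℝ × ℝ → ℝ) : Prop :=
  LocallyIntegrableOn u s volume ∧ LocallyIntegrableOn g s volume ∧
    ∀ φ : ℝ × ℝ → ℝ, IsTestOn s φ →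
      ∫ x in s, u x * fderiv ℝ φ x e = -∫ x in s, g x * φ x

theorem HasWeakDerivAlong.of_tendsto {p q : ℝ≥0∞} [p.HolderConjugate q] (hs : IsOpen s)
    (hω : ContinuousOn ω s) (hω₀ : ∀ x ∈ s, ω x ≠ 0) {φ : ℕ → ℝ × ℝ → ℝ} {u g : ℝ × ℝ → ℝ}
    (hφ : ∀ n, IsTestOn s (φ n)) (hu : MemLp u p (volume.restrict s))
    (hg : MemLp (fun x => ω x * g x) p (volume.restrict s))
    (hlim : Tendsto (fun n => eLpNorm (φ n - u) p (volume.restrict s)) atTop (𝓝 0))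
    (hlim' : Tendsto (fun n => eLpNorm (fun x => ω x * fderiv ℝ (φ n) x e - ω x * g x) p
      (volume.restrict s)) atTop (𝓝 0)) :
    HasWeakDerivAlong e s u g := by
  have hp : 1 ≤ p := ENNReal.HolderConjugate.one_le p q
  refine ⟨locallyIntegrableOn_of_locallyIntegrable_restrict (hu.locallyIntegrable hp),
    locallyIntegrableOn_of_memLp_mul hp hs hω hω₀ hg, fun ψ hψ => ?_⟩
  have hcancel (f : ℝ × ℝ → ℝ) :
      ∫ x in s, ω x * f x * ((ω x)⁻¹ * ψ x) = ∫ x in s, f x * ψ x :=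
    setIntegral_congr_fun hs.measurableSet fun x hx => by
      have := hω₀ x hx
      field_simp
  have hleft := tendsto_integral_mul_of_tendsto_eLpNorm (q := q) hu (fun n => (hφ n).memLp)
    (hψ.memLp_fderiv e) hlim
  have hright : Tendsto (fun n => ∫ x in s, fderiv ℝ (φ n) x e * ψ x) atTop
      (𝓝 (∫ x in s, g x * ψ x)) := by
    simpa only [Pi.inv_apply, hcancel] using tendsto_integral_mul_of_tendsto_eLpNorm (q := q) hg
      (fun n => (hφ n).memLp_mul_fderiv hs hω e) (hψ.memLp_mul hs (hω.inv₀ hω₀)) hlim'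
  exact tendsto_nhds_unique hleft
    (hright.neg.congr fun n => ((hφ n).setIntegral_mul_fderiv hψ e).symm)

end WeakDerivative

section LipschitzComposition

theorem norm_sub_le_of_norm_fderiv_le {E G : Type*} [NormedAddCommGroup E] [NormedSpace ℝ E]
    [NormedAddCommGroup G] [NormedSpace ℝ G] {F : E → G} {C : ℝ} (hF : Differentiable ℝ F)
    (hFC : ∀ z, ‖fderiv ℝ F z‖ ≤ C) (y z : E) : ‖F z - F y‖ ≤ C * ‖z - y‖ :=
  convex_univ.norm_image_sub_le_of_norm_fderiv_le (fun x _ => hF x) (fun x _ => hFC x)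
    (mem_univ y) (mem_univ z)

theorem mul_clm_apply_mk (L : ℝ × ℝ →L[ℝ] ℝ) (c a b : ℝ) : c * L (a, b) = L (c * a, c * b) := by
  rw [← smul_eq_mul, ← map_smul]; rfl

theorem norm_clm_le_two_of_sq_le {L : ℝ × ℝ →L[ℝ] ℝ} (hL : ∀ w, L w ^ 2 ≤ w.1 ^ 2 + w.2 ^ 2) :
    ‖L‖ ≤ 2 := by
  refine L.opNorm_le_bound zero_le_two fun w => abs_le_of_sq_le_sq ((hL w).trans ?_) (by positivity)
  have hfst := pow_le_pow_left₀ (norm_nonneg _) (norm_fst_le w) 2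
  have hsnd := pow_le_pow_left₀ (norm_nonneg _) (norm_snd_le w) 2
  simp only [Real.norm_eq_abs, sq_abs] at hfst hsnd
  nlinarith [sq_nonneg ‖w‖]

variable {X : Type*} [MeasurableSpace X] {μ : Measure X} {F : ℝ × ℝ → ℝ} {C : ℝ}
  {ω u v g h : X → ℝ} {φ ψ : ℕ → X → ℝ}

theorem memLp_comp₂ {p : ℝ≥0∞} (hF : Differentiable ℝ F) (hF₀ : F 0 = 0)
    (hFC : ∀ z, ‖fderiv ℝ F z‖ ≤ C) (hu : MemLp u p μ) (hv : MemLp v p μ) :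
    MemLp (fun x => F (u x, v x)) p μ :=
  (MemLp.of_fst_snd (f := fun x => (u x, v x)) ⟨hu, hv⟩).of_le_mul
    (hF.continuous.comp_aestronglyMeasurable (hu.1.prodMk hv.1))
    (.of_forall fun x => by simpa [hF₀] using norm_sub_le_of_norm_fderiv_le hF hFC 0 (u x, v x))

theorem memLp_mul_fderiv_comp₂ {p : ℝ≥0∞} (hF : ContDiff ℝ (⊤ : ℕ∞) F)
    (hFC : ∀ z, ‖fderiv ℝ F z‖ ≤ C) (hu : AEStronglyMeasurable u μ)
    (hv : AEStronglyMeasurable v μ) (hg : MemLp (fun x => ω x * g x) p μ)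
    (hh : MemLp (fun x => ω x * h x) p μ) :
    MemLp (fun x => ω x * fderiv ℝ F (u x, v x) (g x, h x)) p μ := by
  have hgh := MemLp.of_fst_snd (f := fun x => (ω x * g x, ω x * h x)) ⟨hg, hh⟩
  simp_rw [mul_clm_apply_mk]
  refine hgh.of_le_mul (isBoundedBilinearMap_apply.continuous.comp_aestronglyMeasurable
    (((hF.continuous_fderiv (by simp)).comp_aestronglyMeasurable (hu.prodMk hv)).prodMk hgh.1))
    (.of_forall fun x => (fderiv ℝ F _).le_of_opNorm_le (hFC _) _)

theorem tendsto_eLpNorm_comp₂_sub {p : ℝ≥0∞} (hp : 1 ≤ p) (hF : Differentiable ℝ F)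
    (hFC : ∀ z, ‖fderiv ℝ F z‖ ≤ C) (hu : AEStronglyMeasurable u μ)
    (hv : AEStronglyMeasurable v μ) (hφ : ∀ n, AEStronglyMeasurable (φ n) μ)
    (hψ : ∀ n, AEStronglyMeasurable (ψ n) μ)
    (hφu : Tendsto (fun n => eLpNorm (φ n - u) p μ) atTop (𝓝 0))
    (hψv : Tendsto (fun n => eLpNorm (ψ n - v) p μ) atTop (𝓝 0)) :
    Tendsto (fun n => eLpNorm ((fun x => F (φ n x, ψ n x)) - fun x => F (u x, v x)) p μ)
      atTop (𝓝 0) := by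
  have hbound := ENNReal.Tendsto.const_mul (a := ENNReal.ofReal C)
    (tendsto_eLpNorm_prodMk_sub hp hu hv hφ hψ hφu hψv) (.inr ENNReal.ofReal_ne_top)
  refine tendsto_of_tendsto_of_tendsto_of_le_of_le tendsto_const_nhds
    (by simpa only [mul_zero] using hbound) (fun n => zero_le) fun n => ?_
  exact eLpNorm_le_mul_eLpNorm_of_ae_le_mul
    (.of_forall fun x => norm_sub_le_of_norm_fderiv_le hF hFC (u x, v x) (φ n x, ψ n x)) p

end LipschitzComposition

section ChainRule

variable {s : Set (ℝ × ℝ)} {ω : ℝ × ℝ → ℝ} {F : ℝ × ℝ → ℝ} {C : ℝ} {u v g h : ℝ × ℝ → ℝ}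
  {φ ψ : ℕ → ℝ × ℝ → ℝ}

theorem tendsto_eLpNorm_fderiv_comp₂_sub {p : ℝ≥0∞} (hp₁ : 1 ≤ p) (hp : p ≠ ∞) (hs : IsOpen s)
    (hω : ContinuousOn ω s) (hF : ContDiff ℝ (⊤ : ℕ∞) F) (hFC : ∀ z, ‖fderiv ℝ F z‖ ≤ C)
    (e : ℝ × ℝ) (hφ : ∀ n, IsTestOn s (φ n)) (hψ : ∀ n, IsTestOn s (ψ n))
    (hφu : ∀ᵐ x ∂volume.restrict s, Tendsto (φ · x) atTop (𝓝 (u x)))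
    (hψv : ∀ᵐ x ∂volume.restrict s, Tendsto (ψ · x) atTop (𝓝 (v x)))
    (hg : MemLp (fun x => ω x * g x) p (volume.restrict s))
    (hh : MemLp (fun x => ω x * h x) p (volume.restrict s))
    (hφg : Tendsto (fun n => eLpNorm (fun x => ω x * fderiv ℝ (φ n) x e - ω x * g x) p
      (volume.restrict s)) atTop (𝓝 0))
    (hψh : Tendsto (fun n => eLpNorm (fun x => ω x * fderiv ℝ (ψ n) x e - ω x * h x) p
      (volume.restrict s)) atTop (𝓝 0)) :
    Tendsto (fun n => eLpNorm (fun x => ω x * fderiv ℝ (fun x => F (φ n x, ψ n x)) x e -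
      ω x * fderiv ℝ F (u x, v x) (g x, h x)) p (volume.restrict s)) atTop (𝓝 0) := by
  have hφm (n : ℕ) := ((hφ n).memLp_mul_fderiv (p := p) hs hω e).1
  have hψm (n : ℕ) := ((hψ n).memLp_mul_fderiv (p := p) hs hω e).1
  have hF' : Continuous (fderiv ℝ F) := hF.continuous_fderiv (by simp)
  have hmain : Tendsto (fun n => eLpNorm (fun x =>
      fderiv ℝ F (φ n x, ψ n x) (ω x * fderiv ℝ (φ n) x e, ω x * fderiv ℝ (ψ n) x e) -
        fderiv ℝ F (u x, v x) (ω x * g x, ω x * h x)) p (volume.restrict s)) atTop (𝓝 0) := by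
    refine tendsto_eLpNorm_clm_apply_sub (C := C) hp₁ hp (MemLp.of_fst_snd ⟨hg, hh⟩)
      (fun n => (hφm n).prodMk (hψm n)) (fun n => ?_) (fun n x => hFC _) ?_
      (tendsto_eLpNorm_prodMk_sub hp₁ hg.1 hh.1 hφm hψm hφg hψh)
    · exact (hF'.comp ((hφ n).1.continuous.prodMk (hψ n).1.continuous)).aestronglyMeasurable
    · filter_upwards [hφu, hψv] with x hx hx'
      exact (hF'.tendsto _).comp (hx.prodMk_nhds hx')
  refine hmain.congr fun n => congrArg (eLpNorm · p _) (funext fun x => ?_)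
  rw [(hφ n).fderiv_comp₂ (hF.differentiable (by simp)) (hψ n),
    mul_clm_apply_mk (fderiv ℝ F _), mul_clm_apply_mk (fderiv ℝ F _)]

end ChainRule

theorem isOpen_Omega : IsOpen Omega := isOpen_Ioo.prod isOpen_Ioo

instance isFiniteMeasure_restrict_Omega :
    IsFiniteMeasure ((volume : Measure (ℝ × ℝ)).restrict Omega) :=
  isFiniteMeasure_restrict.2
    ((Metric.isBounded_Ioo (0 : ℝ) 1).prod (Metric.isBounded_Ioo (0 : ℝ) 1)).measure_lt_top.ne

theorem continuousOn_snd_rpow (a : ℝ) : ContinuousOn (fun x : ℝ × ℝ => x.2 ^ a) Omega :=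
  continuous_snd.continuousOn.rpow_const fun _ hx => .inl hx.2.1.ne'

theorem continuousOn_fst_rpow (a : ℝ) : ContinuousOn (fun x : ℝ × ℝ => x.1 ^ a) Omega :=
  continuous_fst.continuousOn.rpow_const fun _ hx => .inl hx.1.1.ne'

section H1

variable {α₁ α₂ : ℝ} {u ux uy v vx vy : ℝ × ℝ → ℝ} {φ : ℕ → ℝ × ℝ → ℝ}

/-- Test functions `φ n` converging to `u` almost everywhere in `Ω` and in the norm of `𝓗¹(Ω)`,
the latter expressed by the `L²` convergence of the functions and of their weighted gradients: a
sequential form of the approximation property in `MemH10`. -/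
structure H1Approx (α₁ α₂ : ℝ) (φ : ℕ → ℝ × ℝ → ℝ) (u ux uy : ℝ × ℝ → ℝ) : Prop where
  isTest : ∀ n, IsTest (φ n)
  tendsto_ae : ∀ᵐ x ∂volume.restrict Omega, Tendsto (φ · x) atTop (𝓝 (u x))
  tendsto_L2 : Tendsto (fun n => eLpNorm (φ n - u) 2 (volume.restrict Omega)) atTop (𝓝 0)
  tendsto_pdx : Tendsto (fun n => eLpNorm (fun x => x.2 ^ α₁ * pdx (φ n) x - x.2 ^ α₁ * ux x) 2
    (volume.restrict Omega)) atTop (𝓝 0)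
  tendsto_pdy : Tendsto (fun n => eLpNorm (fun x => x.1 ^ α₂ * pdy (φ n) x - x.1 ^ α₂ * uy x) 2
    (volume.restrict Omega)) atTop (𝓝 0)

theorem tendsto_H1Norm_sub_iff (hu : MemLp u 2 (volume.restrict Omega))
    (hux : MemLp (fun x => x.2 ^ α₁ * ux x) 2 (volume.restrict Omega))
    (huy : MemLp (fun x => x.1 ^ α₂ * uy x) 2 (volume.restrict Omega))
    (hφ : ∀ n, IsTest (φ n)) :
    Tendsto (fun n => H1Norm α₁ α₂ (fun x => u x - φ n x) (fun x => ux x - pdx (φ n) x)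
      (fun x => uy x - pdy (φ n) x)) atTop (𝓝 0) ↔
    Tendsto (fun n => eLpNorm (φ n - u) 2 (volume.restrict Omega)) atTop (𝓝 0) ∧
    Tendsto (fun n => eLpNorm (fun x => x.2 ^ α₁ * pdx (φ n) x - x.2 ^ α₁ * ux x) 2
      (volume.restrict Omega)) atTop (𝓝 0) ∧
    Tendsto (fun n => eLpNorm (fun x => x.1 ^ α₂ * pdy (φ n) x - x.1 ^ α₂ * uy x) 2
      (volume.restrict Omega)) atTop (𝓝 0) := by
  rw [tendsto_eLpNorm_two_zero_iff fun n => (hφ n).memLp.sub hu,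
    tendsto_eLpNorm_two_zero_iff (f := fun n x => x.2 ^ α₁ * pdx (φ n) x - x.2 ^ α₁ * ux x)
      fun n => ((hφ n).memLp_mul_fderiv isOpen_Omega (continuousOn_snd_rpow α₁) (1, 0)).sub hux,
    tendsto_eLpNorm_two_zero_iff (f := fun n x => x.1 ^ α₂ * pdy (φ n) x - x.1 ^ α₂ * uy x)
      fun n => ((hφ n).memLp_mul_fderiv isOpen_Omega (continuousOn_fst_rpow α₂) (0, 1)).sub huy]
  simp only [H1Norm, mul_sub, Pi.sub_apply, sub_sq_comm (u _), sub_sq_comm (_ * ux _),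
    sub_sq_comm (_ * uy _)]
  have hnonneg (f : ℕ → ℝ × ℝ → ℝ) (n : ℕ) : 0 ≤ ∫ x in Omega, f n x ^ 2 :=
    integral_nonneg fun _ => sq_nonneg _
  exact tendsto_sqrt_add_add_zero_iff (hnonneg _) (hnonneg _) (hnonneg _)

theorem MemH10.exists_h1Approx (hu : MemH10 α₁ α₂ u ux uy) :
    ∃ φ, H1Approx α₁ α₂ φ u ux uy := by
  choose φ hφ hlt using fun n : ℕ => hu.2 (1 / (n + 1)) (by positivity)
  obtain ⟨hL2, hpdx, hpdy⟩ := (tendsto_H1Norm_sub_iff hu.1.memL2 hu.1.wgx hu.1.wgy hφ).1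
    (squeeze_zero (fun n => Real.sqrt_nonneg _) (fun n => (hlt n).le)
      tendsto_one_div_add_atTop_nhds_zero_nat)
  obtain ⟨k, hk, hae⟩ := (tendstoInMeasure_of_tendsto_eLpNorm two_ne_zero
    (fun n => ((hφ n).memLp (p := 2)).1) hu.1.memL2.1 hL2).exists_seq_tendsto_ae
  exact ⟨φ ∘ k, fun n => hφ _, hae, hL2.comp hk.tendsto_atTop, hpdx.comp hk.tendsto_atTop,
    hpdy.comp hk.tendsto_atTop⟩

theorem H1Approx.memH10 (h : H1Approx α₁ α₂ φ u ux uy) (hu : MemLp u 2 (volume.restrict Omega))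
    (hux : MemLp (fun x => x.2 ^ α₁ * ux x) 2 (volume.restrict Omega))
    (huy : MemLp (fun x => x.1 ^ α₂ * uy x) 2 (volume.restrict Omega)) :
    MemH10 α₁ α₂ u ux uy := by
  refine ⟨⟨hu, ?_, ?_, hux, huy⟩, fun ε hε => ?_⟩
  · exact HasWeakDerivAlong.of_tendsto (e := (1, 0)) (p := 2) (q := 2) isOpen_Omega
      (continuousOn_snd_rpow α₁) (fun x hx => (Real.rpow_pos_of_pos hx.2.1 _).ne') h.isTest hu hux
      h.tendsto_L2 h.tendsto_pdx
  · exact HasWeakDerivAlong.of_tendsto (e := (0, 1)) (p := 2) (q := 2) isOpen_Omega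
      (continuousOn_fst_rpow α₂) (fun x hx => (Real.rpow_pos_of_pos hx.1.1 _).ne') h.isTest hu huy
      h.tendsto_L2 h.tendsto_pdy
  · have hlim := (tendsto_H1Norm_sub_iff hu hux huy h.isTest).2
      ⟨h.tendsto_L2, h.tendsto_pdx, h.tendsto_pdy⟩
    obtain ⟨n, hn⟩ := (hlim.eventually_lt_const hε).exists
    exact ⟨φ n, h.isTest n, hn⟩

theorem MemH10.comp₂ (hu : MemH10 α₁ α₂ u ux uy) (hv : MemH10 α₁ α₂ v vx vy)
    {F : ℝ × ℝ → ℝ} {C : ℝ} (hF : ContDiff ℝ (⊤ : ℕ∞) F) (hF₀ : F 0 = 0)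
    (hFC : ∀ z, ‖fderiv ℝ F z‖ ≤ C) :
    MemH10 α₁ α₂ (fun x => F (u x, v x)) (fun x => fderiv ℝ F (u x, v x) (ux x, vx x))
      (fun x => fderiv ℝ F (u x, v x) (uy x, vy x)) := by
  obtain ⟨φ, hφ⟩ := hu.exists_h1Approx
  obtain ⟨ψ, hψ⟩ := hv.exists_h1Approx
  have hF' : Differentiable ℝ F := hF.differentiable (by simp)
  have happrox : H1Approx α₁ α₂ (fun n x => F (φ n x, ψ n x)) (fun x => F (u x, v x))
      (fun x => fderiv ℝ F (u x, v x) (ux x, vx x))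
      (fun x => fderiv ℝ F (u x, v x) (uy x, vy x)) :=
    { isTest := fun n => (hφ.isTest n).comp₂ hF hF₀ (hψ.isTest n)
      tendsto_ae := by
        filter_upwards [hφ.tendsto_ae, hψ.tendsto_ae] with x hu hv
        exact (hF.continuous.tendsto _).comp (hu.prodMk_nhds hv)
      tendsto_L2 := tendsto_eLpNorm_comp₂_sub one_le_two hF' hFC hu.1.memL2.1 hv.1.memL2.1
        (fun n => ((hφ.isTest n).memLp (p := 2)).1) (fun n => ((hψ.isTest n).memLp (p := 2)).1)
        hφ.tendsto_L2 hψ.tendsto_L2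
      tendsto_pdx := tendsto_eLpNorm_fderiv_comp₂_sub one_le_two ENNReal.ofNat_ne_top isOpen_Omega
        (continuousOn_snd_rpow α₁) hF hFC (1, 0) hφ.isTest hψ.isTest hφ.tendsto_ae hψ.tendsto_ae
        hu.1.wgx hv.1.wgx hφ.tendsto_pdx hψ.tendsto_pdx
      tendsto_pdy := tendsto_eLpNorm_fderiv_comp₂_sub one_le_two ENNReal.ofNat_ne_top isOpen_Omega
        (continuousOn_fst_rpow α₂) hF hFC (0, 1) hφ.isTest hψ.isTest hφ.tendsto_ae hψ.tendsto_ae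
        hu.1.wgy hv.1.wgy hφ.tendsto_pdy hψ.tendsto_pdy }
  exact happrox.memH10 (memLp_comp₂ hF' hF₀ hFC hu.1.memL2 hv.1.memL2)
    (memLp_mul_fderiv_comp₂ hF hFC hu.1.memL2.1 hv.1.memL2.1 hu.1.wgx hv.1.wgx)
    (memLp_mul_fderiv_comp₂ hF hFC hu.1.memL2.1 hv.1.memL2.1 hu.1.wgy hv.1.wgy)

theorem MemH10.comp (hu : MemH10 α₁ α₂ u ux uy) {f : ℝ → ℝ} {C : ℝ}
    (hf : ContDiff ℝ (⊤ : ℕ∞) f) (hf₀ : f 0 = 0) (hfC : ∀ r, |deriv f r| ≤ C) :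
    MemH10 α₁ α₂ (fun x => f (u x)) (fun x => deriv f (u x) * ux x)
      (fun x => deriv f (u x) * uy x) := by
  have hfd (z w : ℝ × ℝ) : fderiv ℝ (fun z : ℝ × ℝ => f z.1) z w = deriv f z.1 * w.1 := by
    have h := (hf.differentiable (by simp) z.1).hasDerivAt.comp_hasFDerivAt z
      (hasFDerivAt_fst (𝕜 := ℝ))
    exact DFunLike.congr_fun h.fderiv w
  have hbound (z : ℝ × ℝ) : ‖fderiv ℝ (fun z : ℝ × ℝ => f z.1) z‖ ≤ C := by
    refine ContinuousLinearMap.opNorm_le_bound _ ((abs_nonneg _).trans (hfC 0)) fun w => ?_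
    rw [hfd, norm_mul]
    exact mul_le_mul (hfC _) (norm_fst_le w) (norm_nonneg _) ((abs_nonneg _).trans (hfC 0))
  simpa only [hfd] using hu.comp₂ hu (F := fun z => f z.1) (hf.comp contDiff_fst) hf₀ hbound

theorem MemH10.const_mul (hu : MemH10 α₁ α₂ u ux uy) (c : ℝ) :
    MemH10 α₁ α₂ (fun x => c * u x) (fun x => c * ux x) (fun x => c * uy x) := by
  have hderiv (r : ℝ) : deriv (fun r => c * r) r = c := by simp
  simpa only [hderiv] using hu.comp (f := fun r => c * r) (C := |c|)
    (contDiff_const.mul contDiff_id) (mul_zero c) (fun r => by rw [hderiv])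

/-- The weighted Dirichlet energy `a₁(u, u)`. -/
def a1Energy (α₁ α₂ : ℝ) (u ux uy : ℝ × ℝ → ℝ) : ℝ := a1Form α₁ α₂ u ux uy u ux uy

theorem a1Energy_eq : a1Energy α₁ α₂ u ux uy =
    ∫ x in Omega, ((x.2 ^ α₁ * ux x) ^ 2 + (x.1 ^ α₂ * uy x) ^ 2) := by
  simp only [a1Energy, a1Form, sq]

theorem MemH1.integrableOn_energy (hu : MemH1 α₁ α₂ u ux uy) :
    IntegrableOn (fun x => (x.2 ^ α₁ * ux x) ^ 2 + (x.1 ^ α₂ * uy x) ^ 2) Omega :=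
  hu.wgx.integrable_sq.add hu.wgy.integrable_sq

theorem MemH0.aForm_self {V : ℝ × ℝ → ℝ} (hu : MemH0 α₁ α₂ V u ux uy) :
    aForm α₁ α₂ V u ux uy u ux uy = a1Energy α₁ α₂ u ux uy + ∫ x in Omega, V x * u x ^ 2 := by
  rw [a1Energy_eq, ← integral_add hu.1.1.integrableOn_energy hu.2]
  simp only [aForm, mul_assoc, sq]

theorem a1Energy_const_mul (c : ℝ) :
    a1Energy α₁ α₂ (fun x => c * u x) (fun x => c * ux x) (fun x => c * uy x) =
      c ^ 2 * a1Energy α₁ α₂ u ux uy := by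
  rw [a1Energy_eq, a1Energy_eq, ← integral_const_mul]
  congr 1 with x
  ring

theorem MemH0.const_mul {V : ℝ × ℝ → ℝ} (hu : MemH0 α₁ α₂ V u ux uy) (c : ℝ) :
    MemH0 α₁ α₂ V (fun x => c * u x) (fun x => c * ux x) (fun x => c * uy x) := by
  refine ⟨hu.1.const_mul c, (hu.2.const_mul (c ^ 2)).congr (.of_forall fun x => ?_)⟩
  ring

theorem a1Energy_comp₂_le (hu : MemH1 α₁ α₂ u ux uy) (hv : MemH1 α₁ α₂ v vx vy)
    {F : ℝ × ℝ → ℝ} (hF : ContDiff ℝ (⊤ : ℕ∞) F)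
    (hF' : ∀ z w, fderiv ℝ F z w ^ 2 ≤ w.1 ^ 2 + w.2 ^ 2) :
    a1Energy α₁ α₂ (fun x => F (u x, v x)) (fun x => fderiv ℝ F (u x, v x) (ux x, vx x))
        (fun x => fderiv ℝ F (u x, v x) (uy x, vy x)) ≤
      a1Energy α₁ α₂ u ux uy + a1Energy α₁ α₂ v vx vy := by
  have hFC (z : ℝ × ℝ) : ‖fderiv ℝ F z‖ ≤ 2 := norm_clm_le_two_of_sq_le (hF' z)
  simp only [a1Energy_eq]
  rw [← integral_add hu.integrableOn_energy hv.integrableOn_energy]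
  refine integral_mono
    ((memLp_mul_fderiv_comp₂ hF hFC hu.memL2.1 hv.memL2.1 hu.wgx hv.wgx).integrable_sq.add
      (memLp_mul_fderiv_comp₂ hF hFC hu.memL2.1 hv.memL2.1 hu.wgy hv.wgy).integrable_sq)
    (hu.integrableOn_energy.add hv.integrableOn_energy) fun x => ?_
  have hx := hF' (u x, v x) (x.2 ^ α₁ * ux x, x.2 ^ α₁ * vx x)
  have hy := hF' (u x, v x) (x.1 ^ α₂ * uy x, x.1 ^ α₂ * vy x)
  rw [← mul_clm_apply_mk] at hx hy
  dsimp only [Pi.add_apply] at hx hy ⊢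
  linarith

theorem a1Energy_comp_le (hu : MemH1 α₁ α₂ u ux uy) {f : ℝ → ℝ}
    (hf' : ∀ r, |deriv f r| ≤ 1) :
    a1Energy α₁ α₂ (fun x => f (u x)) (fun x => deriv f (u x) * ux x)
      (fun x => deriv f (u x) * uy x) ≤ a1Energy α₁ α₂ u ux uy := by
  simp only [a1Energy_eq]
  refine integral_mono_of_nonneg (.of_forall fun x => by positivity) hu.integrableOn_energy
    (.of_forall fun x => ?_)
  have hle (a b : ℝ) : (a * (deriv f (u x) * b)) ^ 2 ≤ (a * b) ^ 2 := by
    rw [mul_left_comm, mul_pow]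
    exact mul_le_of_le_one_left (sq_nonneg _) ((sq_le_one_iff_abs_le_one _).2 (hf' _))
  exact add_le_add (hle _ _) (hle _ _)

end H1

section SmoothNorm

variable {δ : ℝ}

/-- A smooth approximation from below of the Euclidean norm of `ℝ²`, vanishing at the origin;
composing it with `(u, v)` replaces `√(u² + v²)` by an admissible function. -/
def smoothNorm (δ : ℝ) (z : ℝ × ℝ) : ℝ := √(z.1 ^ 2 + z.2 ^ 2 + δ ^ 2) - δ

theorem contDiff_smoothNorm (hδ : 0 < δ) : ContDiff ℝ (⊤ : ℕ∞) (smoothNorm δ) :=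
  (ContDiff.sqrt (by fun_prop) fun z => by positivity).sub contDiff_const

theorem smoothNorm_zero (hδ : 0 < δ) : smoothNorm δ 0 = 0 := by
  simp [smoothNorm, Real.sqrt_sq hδ.le]

theorem smoothNorm_sq_le (hδ : 0 < δ) (z : ℝ × ℝ) : smoothNorm δ z ^ 2 ≤ z.1 ^ 2 + z.2 ^ 2 := by
  have hle : δ ≤ √(z.1 ^ 2 + z.2 ^ 2 + δ ^ 2) := Real.le_sqrt_of_sq_le (by nlinarith)
  have hsq := Real.sq_sqrt (by positivity : 0 ≤ z.1 ^ 2 + z.2 ^ 2 + δ ^ 2)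
  rw [smoothNorm]
  nlinarith

theorem fst_eq_zero_of_smoothNorm_eq_zero (hδ : 0 < δ) {z : ℝ × ℝ} (hz : smoothNorm δ z = 0) :
    z.1 = 0 := by
  have hsq := Real.sq_sqrt (by positivity : 0 ≤ z.1 ^ 2 + z.2 ^ 2 + δ ^ 2)
  rw [sub_eq_zero.1 hz] at hsq
  exact pow_eq_zero_iff two_ne_zero |>.1 (by nlinarith [sq_nonneg z.1, sq_nonneg z.2])

theorem fderiv_smoothNorm (hδ : 0 < δ) (z w : ℝ × ℝ) :
    fderiv ℝ (smoothNorm δ) z w = (z.1 * w.1 + z.2 * w.2) / √(z.1 ^ 2 + z.2 ^ 2 + δ ^ 2) := by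
  have hpos : z.1 ^ 2 + z.2 ^ 2 + δ ^ 2 ≠ 0 := by positivity
  have h : HasFDerivAt (smoothNorm δ) _ z :=
    ((((hasFDerivAt_fst (𝕜 := ℝ) (p := z)).pow 2).add ((hasFDerivAt_snd (𝕜 := ℝ) (p := z)).pow 2)
      ).add_const (δ ^ 2)).sqrt hpos |>.sub_const δ
  rw [h.fderiv]
  simp only [Pi.add_apply, one_div, mul_inv_rev, Nat.add_one_sub_one, pow_one, nsmul_eq_mul,
    Nat.cast_ofNat, smul_add, add_apply, smul_apply, ContinuousLinearMap.coe_fst', smul_eq_mul,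
    ContinuousLinearMap.coe_snd']
  field_simp

theorem fderiv_smoothNorm_sq_le (hδ : 0 < δ) (z w : ℝ × ℝ) :
    fderiv ℝ (smoothNorm δ) z w ^ 2 ≤ w.1 ^ 2 + w.2 ^ 2 := by
  rw [fderiv_smoothNorm hδ, div_pow, Real.sq_sqrt (by positivity), div_le_iff₀ (by positivity)]
  nlinarith [sq_nonneg (z.1 * w.2 - z.2 * w.1), mul_nonneg (sq_nonneg δ) (sq_nonneg w.1),
    mul_nonneg (sq_nonneg δ) (sq_nonneg w.2)]

theorem tendsto_smoothNorm_sq (z : ℝ × ℝ) :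
    Tendsto (fun δ => smoothNorm δ z ^ 2) (𝓝 0) (𝓝 (z.1 ^ 2 + z.2 ^ 2)) := by
  have hcont : Continuous fun δ => smoothNorm δ z ^ 2 := by unfold smoothNorm; fun_prop
  simpa [smoothNorm, Real.sq_sqrt (add_nonneg (sq_nonneg z.1) (sq_nonneg z.2))] using
    hcont.tendsto 0

theorem tendsto_integral_smoothNorm_sq {X : Type*} [MeasurableSpace X] {μ : Measure X} {u v : X → ℝ}
    (hu : MemLp u 2 μ) (hv : MemLp v 2 μ) :
    Tendsto (fun δ => ∫ x, smoothNorm δ (u x, v x) ^ 2 ∂μ) (𝓝[>] 0)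
      (𝓝 (∫ x, (u x ^ 2 + v x ^ 2) ∂μ)) := by
  refine tendsto_integral_filter_of_dominated_convergence (fun x => u x ^ 2 + v x ^ 2) ?_ ?_
    (hu.integrable_sq.add hv.integrable_sq)
    (.of_forall fun x => (tendsto_smoothNorm_sq _).mono_left nhdsWithin_le_nhds)
  · filter_upwards [self_mem_nhdsWithin] with δ hδ
    exact ((contDiff_smoothNorm hδ).continuous.comp_aestronglyMeasurable (hu.1.prodMk hv.1)).pow 2
  · filter_upwards [self_mem_nhdsWithin] with δ hδ
    refine .of_forall fun x => ?_
    rw [Real.norm_of_nonneg (sq_nonneg _)]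
    exact smoothNorm_sq_le hδ _

end SmoothNorm

section SinTruncation

variable {c : ℝ}

/-- A smooth bounded contraction `ℝ → ℝ` converging to the identity as `c → 0`, used to truncate
Sobolev functions. -/
def sinTruncation (c r : ℝ) : ℝ := Real.sin (c * r) / c

theorem contDiff_sinTruncation : ContDiff ℝ (⊤ : ℕ∞) (sinTruncation c) :=
  (Real.contDiff_sin.comp (contDiff_const.mul contDiff_id)).div_const c

theorem deriv_sinTruncation (hc : c ≠ 0) (r : ℝ) :
    deriv (sinTruncation c) r = Real.cos (c * r) := by
  have h : HasDerivAt (sinTruncation c) (Real.cos (c * r) * (c * 1) / c) r :=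
    ((hasDerivAt_id r).const_mul c).sin.div_const c
  rw [h.deriv, mul_one, mul_div_cancel_right₀ _ hc]

theorem abs_deriv_sinTruncation_le (hc : c ≠ 0) (r : ℝ) : |deriv (sinTruncation c) r| ≤ 1 := by
  rw [deriv_sinTruncation hc]
  exact Real.abs_cos_le_one _

theorem sinTruncation_sq_le (hc : c ≠ 0) (r : ℝ) : sinTruncation c r ^ 2 ≤ r ^ 2 := by
  rw [sinTruncation, div_pow, div_le_iff₀ (by positivity), ← mul_pow, mul_comm r, sq_le_sq]
  exact Real.abs_sin_le_abs

theorem abs_sinTruncation_le (r : ℝ) : |sinTruncation c r| ≤ 1 / |c| := by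
  rw [sinTruncation, abs_div]
  gcongr
  exact Real.abs_sin_le_one _

theorem tendsto_sinTruncation (r : ℝ) :
    Tendsto (fun c => sinTruncation c r) (𝓝[≠] 0) (𝓝 r) := by
  have h := hasDerivAt_iff_tendsto_slope_zero.1 (((hasDerivAt_mul_const (x := (0 : ℝ)) r)).sin)
  simpa [sinTruncation, div_eq_inv_mul] using h

theorem tendsto_integral_sinTruncation_sq {X : Type*} [MeasurableSpace X] {μ : Measure X}
    {v : X → ℝ} (hv : MemLp v 2 μ) :
    Tendsto (fun c => ∫ x, sinTruncation c (v x) ^ 2 ∂μ) (𝓝[≠] 0) (𝓝 (∫ x, v x ^ 2 ∂μ)) := by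
  refine tendsto_integral_filter_of_dominated_convergence (fun x => v x ^ 2)
    (.of_forall fun c => ?_) ?_ hv.integrable_sq
    (.of_forall fun x => (tendsto_sinTruncation (v x)).pow 2)
  · exact (contDiff_sinTruncation.continuous.comp_aestronglyMeasurable hv.1).pow 2
  · filter_upwards [self_mem_nhdsWithin] with c hc
    refine .of_forall fun x => ?_
    rw [Real.norm_of_nonneg (sq_nonneg _)]
    exact sinTruncation_sq_le hc _

end SinTruncation

section Minimizer

variable {α₁ α₂ p q M lam δ : ℝ} {u ux uy v vx vy V : ℝ × ℝ → ℝ}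

theorem MemU.Jfun_mul_integral_sq (hu : MemU α₁ α₂ q u ux uy) :
    Jfun α₁ α₂ M q u ux uy * ∫ x in Omega, u x ^ 2 =
      a1Energy α₁ α₂ u ux uy + M * (∫ x in Omega, |u x ^ 2| ^ q) ^ (1 / q) := by
  rw [Jfun, div_mul_cancel₀ _ (integral_sq_pos hu.1.1.memL2 hu.2.2).ne']
  simp only [Real.rpow_mul (abs_nonneg _), Real.rpow_ofNat, abs_pow, a1Energy]

theorem MemU.le_Jfun_iff (hu : MemU α₁ α₂ q u ux uy) :
    lam ≤ Jfun α₁ α₂ M q u ux uy ↔ lam * ∫ x in Omega, u x ^ 2 ≤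
      a1Energy α₁ α₂ u ux uy + M * (∫ x in Omega, |u x ^ 2| ^ q) ^ (1 / q) := by
  rw [← hu.Jfun_mul_integral_sq, mul_le_mul_iff_left₀ (integral_sq_pos hu.1.1.memL2 hu.2.2)]

theorem MemU.smoothNorm_comp (hδ : 0 < δ) (hu : MemU α₁ α₂ q u ux uy) (hv : MemH10 α₁ α₂ v vx vy)
    (hvq : MemLp v (.ofReal (2 * q)) (volume.restrict Omega)) :
    MemU α₁ α₂ q (fun x => smoothNorm δ (u x, v x))
      (fun x => fderiv ℝ (smoothNorm δ) (u x, v x) (ux x, vx x))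
      (fun x => fderiv ℝ (smoothNorm δ) (u x, v x) (uy x, vy x)) := by
  have hF := contDiff_smoothNorm hδ
  have hFC (z : ℝ × ℝ) := norm_clm_le_two_of_sq_le (fderiv_smoothNorm_sq_le hδ z)
  refine ⟨hu.1.comp₂ hv hF (smoothNorm_zero hδ) hFC,
    memLp_comp₂ (hF.differentiable (by simp)) (smoothNorm_zero hδ) hFC hu.2.1 hvq,
    fun h => hu.2.2 ?_⟩
  filter_upwards [h] with x hx using fst_eq_zero_of_smoothNorm_eq_zero hδ hx

theorem mul_integral_smoothNorm_sq_le (hq : 0 < q) (hM : 0 ≤ M) (hδ : 0 < δ)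
    (hu : MemU α₁ α₂ q u ux uy)
    (hmin : ∀ w wx wy, MemU α₁ α₂ q w wx wy → lam ≤ Jfun α₁ α₂ M q w wx wy)
    (hv : MemH10 α₁ α₂ v vx vy) (hvq : MemLp v (.ofReal (2 * q)) (volume.restrict Omega)) :
    lam * ∫ x in Omega, smoothNorm δ (u x, v x) ^ 2 ≤
      a1Energy α₁ α₂ u ux uy + a1Energy α₁ α₂ v vx vy +
        M * (∫ x in Omega, |u x ^ 2 + v x ^ 2| ^ q) ^ (1 / q) := by
  have hw := hu.smoothNorm_comp hδ hv hvq
  refine (hw.le_Jfun_iff.1 (hmin _ _ _ hw)).trans (add_le_add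
    (a1Energy_comp₂_le hu.1.1 hv.1 (contDiff_smoothNorm hδ) (fderiv_smoothNorm_sq_le hδ)) ?_)
  gcongr ?_ * ?_ ^ _
  refine integral_mono (integrable_abs_rpow hq (memLp_sq_ofReal hw.2.1)) (integrable_abs_rpow hq
    ((memLp_sq_ofReal hu.2.1).add (memLp_sq_ofReal hvq))) fun x => ?_
  dsimp only [Pi.add_apply]
  gcongr ?_ ^ _
  exact abs_le_abs_of_nonneg (sq_nonneg _) (smoothNorm_sq_le hδ _)

theorem mul_integral_sq_add_sq_le (hq : 0 < q) (hM : 0 ≤ M) (hu : MemU α₁ α₂ q u ux uy)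
    (hmin : ∀ w wx wy, MemU α₁ α₂ q w wx wy → lam ≤ Jfun α₁ α₂ M q w wx wy)
    (hv : MemH10 α₁ α₂ v vx vy) (hvq : MemLp v (.ofReal (2 * q)) (volume.restrict Omega)) :
    lam * ∫ x in Omega, (u x ^ 2 + v x ^ 2) ≤
      a1Energy α₁ α₂ u ux uy + a1Energy α₁ α₂ v vx vy +
        M * (∫ x in Omega, |u x ^ 2 + v x ^ 2| ^ q) ^ (1 / q) := by
  refine le_of_tendsto ((tendsto_integral_smoothNorm_sq hu.1.1.memL2 hv.1.memL2).const_mul lam) ?_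
  filter_upwards [self_mem_nhdsWithin] with δ hδ
  exact mul_integral_smoothNorm_sq_le hq hM hδ hu hmin hv hvq

theorem mul_integral_sq_add_mul_sq_le (hq : 0 < q) (hM : 0 ≤ M) (hu : MemU α₁ α₂ q u ux uy)
    (hmin : ∀ w wx wy, MemU α₁ α₂ q w wx wy → lam ≤ Jfun α₁ α₂ M q w wx wy)
    (hv : MemH10 α₁ α₂ v vx vy) (hvq : MemLp v (.ofReal (2 * q)) (volume.restrict Omega))
    {t : ℝ} (ht : 0 ≤ t) :
    lam * ((∫ x in Omega, u x ^ 2) + t * ∫ x in Omega, v x ^ 2) ≤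
      a1Energy α₁ α₂ u ux uy + t * a1Energy α₁ α₂ v vx vy +
        M * (∫ x in Omega, |u x ^ 2 + t * v x ^ 2| ^ q) ^ (1 / q) := by
  have h := mul_integral_sq_add_sq_le hq hM hu hmin (hv.const_mul √t) (hvq.const_mul √t)
  simp only [mul_pow, Real.sq_sqrt ht, a1Energy_const_mul] at h
  rwa [integral_add hu.1.1.memL2.integrable_sq (hv.1.memL2.integrable_sq.const_mul t),
    integral_const_mul] at h

theorem MemSp.integrableOn_mul (hpq : p.HolderConjugate q) (hV : MemSp p M V) {k : ℝ × ℝ → ℝ}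
    (hk : MemLp k (.ofReal q) (volume.restrict Omega)) :
    IntegrableOn (fun x => V x * k x) Omega :=
  have := hpq.ennrealOfReal
  hV.1.integrable_mul hk

theorem MemU.memH0 (hu : MemU α₁ α₂ q u ux uy) (hpq : p.HolderConjugate q)
    (hV : MemSp p M V) : MemH0 α₁ α₂ V u ux uy :=
  ⟨hu.1, hV.integrableOn_mul hpq (memLp_sq_ofReal hu.2.1)⟩

theorem mul_integral_sq_le_of_memLp (hpq : p.HolderConjugate q) (hM : 0 ≤ M)
    (hu : MemU α₁ α₂ q u ux uy)
    (hmin : ∀ w wx wy, MemU α₁ α₂ q w wx wy →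
      Jfun α₁ α₂ M q u ux uy ≤ Jfun α₁ α₂ M q w wx wy)
    (hV : MemSp p M V)
    (hVu : a1Energy α₁ α₂ u ux uy + ∫ x in Omega, V x * u x ^ 2 =
      Jfun α₁ α₂ M q u ux uy * ∫ x in Omega, u x ^ 2)
    (hv : MemH10 α₁ α₂ v vx vy) (hvq : MemLp v (.ofReal (2 * q)) (volume.restrict Omega)) :
    Jfun α₁ α₂ M q u ux uy * ∫ x in Omega, v x ^ 2 ≤
      a1Energy α₁ α₂ v vx vy + ∫ x in Omega, V x * v x ^ 2 := by
  have hu₂ := memLp_sq_ofReal hu.2.1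
  have hN₀ : M * (∫ x in Omega, |u x ^ 2| ^ q) ^ (1 / q) = ∫ x in Omega, V x * u x ^ 2 := by
    linarith [hu.Jfun_mul_integral_sq (M := M)]
  have hslope : Jfun α₁ α₂ M q u ux uy * (∫ x in Omega, v x ^ 2) - a1Energy α₁ α₂ v vx vy ≤
      ∫ x in Omega, V x * v x ^ 2 := by
    refine le_deriv_of_eventually_le (hasDerivAt_of_holder_eq hpq hM hV.1 hV.2.2 hu₂
      (by simpa using hu.2.2) (memLp_sq_ofReal hvq) hN₀) ?_
    filter_upwards [self_mem_nhdsWithin] with t ht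
    have hconv := mul_integral_sq_add_mul_sq_le hpq.symm.pos hM hu hmin hv hvq (le_of_lt ht)
    simp only [zero_mul, add_zero, hN₀]
    linarith
  linarith

theorem MemH10.sinTruncation_comp (hv : MemH10 α₁ α₂ v vx vy) {c : ℝ} (hc : c ≠ 0) :
    MemH10 α₁ α₂ (fun x => sinTruncation c (v x))
      (fun x => deriv (sinTruncation c) (v x) * vx x)
      (fun x => deriv (sinTruncation c) (v x) * vy x) :=
  hv.comp contDiff_sinTruncation (by simp [sinTruncation])
    (abs_deriv_sinTruncation_le hc)

theorem mul_integral_sq_le (hpq : p.HolderConjugate q) (hM : 0 ≤ M)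
    (hu : MemU α₁ α₂ q u ux uy)
    (hmin : ∀ w wx wy, MemU α₁ α₂ q w wx wy →
      Jfun α₁ α₂ M q u ux uy ≤ Jfun α₁ α₂ M q w wx wy)
    (hV : MemSp p M V)
    (hVu : a1Energy α₁ α₂ u ux uy + ∫ x in Omega, V x * u x ^ 2 =
      Jfun α₁ α₂ M q u ux uy * ∫ x in Omega, u x ^ 2)
    (hv : MemH0 α₁ α₂ V v vx vy) :
    Jfun α₁ α₂ M q u ux uy * ∫ x in Omega, v x ^ 2 ≤
      a1Energy α₁ α₂ v vx vy + ∫ x in Omega, V x * v x ^ 2 := by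
  refine le_of_tendsto ((tendsto_integral_sinTruncation_sq hv.1.1.memL2).const_mul _) ?_
  filter_upwards [self_mem_nhdsWithin] with c hc
  have hw := hv.1.sinTruncation_comp hc
  have hwq : MemLp (fun x => sinTruncation c (v x)) (.ofReal (2 * q)) (volume.restrict Omega) :=
    .of_bound hw.1.memL2.1 _ (.of_forall fun x => abs_sinTruncation_le _)
  refine (mul_integral_sq_le_of_memLp hpq hM hu hmin hV hVu hw hwq).trans (add_le_add
    (a1Energy_comp_le hv.1.1 (abs_deriv_sinTruncation_le hc)) (integral_mono_ae
      (hV.integrableOn_mul hpq (memLp_sq_ofReal hwq)) hv.2 ?_))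
  filter_upwards [hV.2.1] with x hx using mul_le_mul_of_nonneg_left (sinTruncation_sq_le hc _) hx

end Minimizer

theorem lam1_eq_of_forall_le {α₁ α₂ lam : ℝ} {V u ux uy : ℝ × ℝ → ℝ}
    (hle : ∀ v vx vy, MemH0 α₁ α₂ V v vx vy →
      lam * ∫ x in Omega, v x ^ 2 ≤ a1Energy α₁ α₂ v vx vy + ∫ x in Omega, V x * v x ^ 2)
    (hu : MemH0 α₁ α₂ V u ux uy) (hu₀ : 0 < ∫ x in Omega, u x ^ 2)
    (heq : a1Energy α₁ α₂ u ux uy + ∫ x in Omega, V x * u x ^ 2 = lam * ∫ x in Omega, u x ^ 2) :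
    lam1 α₁ α₂ V = lam := by
  refine IsLeast.csInf_eq ⟨?_, ?_⟩
  · have hnorm : (√(∫ x in Omega, u x ^ 2))⁻¹ ^ 2 * ∫ x in Omega, u x ^ 2 = 1 := by
      rw [inv_pow, Real.sq_sqrt hu₀.le, inv_mul_cancel₀ hu₀.ne']
    set c := (√(∫ x in Omega, u x ^ 2))⁻¹
    refine ⟨_, _, _, hu.const_mul c, ?_, ?_⟩
    · simp only [mul_pow]
      rw [integral_const_mul, hnorm]
    · rw [(hu.const_mul c).aForm_self, a1Energy_const_mul]
      simp only [mul_pow, mul_left_comm (V _)]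
      rw [integral_const_mul, ← mul_add, heq, mul_left_comm, hnorm, mul_one]
  · rintro r ⟨v, vx, vy, hv, hv₁, rfl⟩
    simpa only [hv₁, mul_one, hv.aForm_self] using hle v vx vy hv

theorem lam1_of_minimizer_general {α₁ α₂ p q M : ℝ} {u ux uy V : ℝ × ℝ → ℝ}
    (hpq : p.HolderConjugate q) (hM : 0 ≤ M) (hu : MemU α₁ α₂ q u ux uy)
    (hmin : ∀ w wx wy : ℝ × ℝ → ℝ, MemU α₁ α₂ q w wx wy →
      Jfun α₁ α₂ M q u ux uy ≤ Jfun α₁ α₂ M q w wx wy)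
    (hV : MemSp p M V)
    (heq : a1Form α₁ α₂ u ux uy u ux uy + (∫ x in Omega, V x * u x * u x) =
      Jfun α₁ α₂ M q u ux uy * ∫ x in Omega, u x * u x) :
    lam1 α₁ α₂ V = Jfun α₁ α₂ M q u ux uy := by
  have hVu : a1Energy α₁ α₂ u ux uy + ∫ x in Omega, V x * u x ^ 2 =
      Jfun α₁ α₂ M q u ux uy * ∫ x in Omega, u x ^ 2 := by
    simpa only [a1Energy, mul_assoc, ← sq] using heq
  exact lam1_eq_of_forall_le (fun v vx vy hv => mul_integral_sq_le hpq hM hu hmin hV hVu hv)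
    (hu.memH0 hpq hV) (integral_sq_pos hu.1.1.memL2 hu.2.2) hVu

/-- If `ũ` minimizes `J` over `U` with `λ = J(ũ)`, and `Ṽ ∈ S_p`
satisfies `a₁(ũ,v) + ∫_Ω Ṽ ũ v = λ ∫_Ω ũ v` for all `v ∈ H₀(Ω)` (formed with `Ṽ`),
then `λ₁(Ṽ) = λ = J(ũ)`. -/
theorem lam1_of_minimizer (α₁ α₂ ppow qe M : ℝ)
    (hα₁ : α₁ ∈ Ioo (0:ℝ) (1/2)) (hα₂ : α₂ ∈ Ioo (0:ℝ) (1/2))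
    (hp : 1 < ppow) (hq : qe = ppow / (ppow - 1)) (hM : 0 < M)
    (ut utx uty : ℝ × ℝ → ℝ) (hmemU : MemU α₁ α₂ qe ut utx uty)
    (hmin : ∀ u gx gy : ℝ × ℝ → ℝ, MemU α₁ α₂ qe u gx gy →
      Jfun α₁ α₂ M qe ut utx uty ≤ Jfun α₁ α₂ M qe u gx gy)
    (Vt : ℝ × ℝ → ℝ) (hVt : MemSp ppow M Vt)
    (heq : ∀ v hx hy : ℝ × ℝ → ℝ, MemH0 α₁ α₂ Vt v hx hy →
      a1Form α₁ α₂ ut utx uty v hx hy + (∫ p in Omega, Vt p * ut p * v p) =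
        Jfun α₁ α₂ M qe ut utx uty * ∫ p in Omega, ut p * v p) :
    lam1 α₁ α₂ Vt = Jfun α₁ α₂ M qe ut utx uty := by
  have hpq := (Real.holderConjugate_iff_eq_conjExponent hp).2 hq
  exact lam1_of_minimizer_general hpq hM.le hmemU hmin hVt (heq _ _ _ (hmemU.memH0 hpq hVt))
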